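/- Let E ⊂ X be a set of finite perimeter and let D ⊂ X be a Borel set. Suppose that {F,G} is a Borel partition of E such that P(E,D) = P(F,D) + P(G,D). Then P(A,D) = P(A ∩ F, D) + P(A ∩ G, D) for every set A ⊂ E of finite perimeter. -/

import Mathlib

open MeasureTheory Metric Filter Set ENNReal NNReal Topology

/-- A curve: a rectifiable continuous map from a compact interval into `X`,
parametrized by arc length (hence `1`-Lipschitz on `[0, len]`). -/
structure Curve (X : Type*) [MetricSpace X] where
  len : ℝ
  len_nonneg : 0 ≤ len
  toFun : ℝ → X
  lipschitzOn : LipschitzOnWith 1 toFun (Set.Icc 0 len)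

namespace Curve

variable {X : Type*} [MetricSpace X]

/-- A curve is nonconstant if it attains two distinct values. -/
def IsNonconstant (γ : Curve X) : Prop :=
  ∃ s ∈ Set.Icc (0:ℝ) γ.len, ∃ t ∈ Set.Icc (0:ℝ) γ.len, γ.toFun s ≠ γ.toFun t

/-- A curve lies in a set `W`. -/
def IsIn (γ : Curve X) (W : Set X) : Prop :=
  ∀ s ∈ Set.Icc (0:ℝ) γ.len, γ.toFun s ∈ W

end Curve

variable {X : Type*} [MetricSpace X] [MeasurableSpace X] [BorelSpace X]

/-- The curve integral `∫_γ g ds` for an arc-length parametrized curve. -/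
noncomputable def curveLintegral (g : X → ℝ≥0∞) (γ : Curve X) : ℝ≥0∞ :=
  ∫⁻ s in Set.Icc (0:ℝ) γ.len, g (γ.toFun s)

/-- The upper gradient inequality `|u(x) - u(y)| ≤ ∫_γ g ds` along a curve `γ`
with endpoints `x, y`. -/
def UpperGradIneq (g : X → ℝ≥0∞) (u : X → ℝ) (γ : Curve X) : Prop :=
  ENNReal.ofReal |u (γ.toFun 0) - u (γ.toFun γ.len)| ≤ curveLintegral g γ

/-- The 1-modulus of a family of curves. -/
noncomputable def mod1 (μ : Measure X) (Γ : Set (Curve X)) : ℝ≥0∞ :=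
  ⨅ (ρ : X → ℝ≥0∞) (_ : Measurable ρ ∧ ∀ γ ∈ Γ, 1 ≤ curveLintegral ρ γ),
    ∫⁻ x, ρ x ∂μ

/-- `g` is a 1-weak upper gradient of `u` in `W`: the upper gradient inequality
holds for all nonconstant curves in `W` outside a family of 1-modulus zero. -/
def IsWeakUpperGradientOn (μ : Measure X) (g : X → ℝ≥0∞) (u : X → ℝ) (W : Set X) : Prop :=
  Measurable g ∧
    mod1 μ {γ : Curve X | γ.IsNonconstant ∧ γ.IsIn W ∧ ¬ UpperGradIneq g u γ} = 0

/-- `g` is a (strong) upper gradient of `u` in `X`. -/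
def IsUpperGradient (g : X → ℝ≥0∞) (u : X → ℝ) : Prop :=
  Measurable g ∧ ∀ γ : Curve X, γ.IsNonconstant → UpperGradIneq g u γ

/-- `∫_W g_u dμ`: the integral over `W` of the minimal 1-weak upper gradient of `u`
in `W`, equivalently the infimum of `∫_W g dμ` over all 1-weak upper gradients `g`
of `u` in `W`. -/
noncomputable def gradEnergy (μ : Measure X) (u : X → ℝ) (W : Set X) : ℝ≥0∞ :=
  ⨅ (g : X → ℝ≥0∞) (_ : IsWeakUpperGradientOn μ g u W), ∫⁻ x in W, g x ∂μ

/-- `u` is locally Lipschitz on `W`. -/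
def LocLipschitzOn (u : X → ℝ) (W : Set X) : Prop :=
  ∀ x ∈ W, ∃ K : ℝ≥0, ∃ t ∈ nhdsWithin x W, LipschitzOnWith K u t

/-- Convergence `uᵢ → v` in `L¹_loc(W)`. -/
def TendstoL1loc (μ : Measure X) (W : Set X) (u : ℕ → X → ℝ) (v : X → ℝ) : Prop :=
  ∀ W' : Set X, IsOpen W' → IsCompact (closure W') → closure W' ⊆ W →
    Tendsto (fun i => ∫⁻ x in W', ENNReal.ofReal |u i x - v x| ∂μ) atTop (𝓝 0)

/-- The total variation `‖Dv‖(W)` of a function `v` in an open set `W`. -/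
noncomputable def variationOn (μ : Measure X) (v : X → ℝ) (W : Set X) : ℝ≥0∞ :=
  ⨅ (u : ℕ → X → ℝ) (_ : (∀ i, LocLipschitzOn (u i) W) ∧ TendstoL1loc μ W u v),
    Filter.liminf (fun i => gradEnergy μ (u i) W) Filter.atTop

/-- The total variation `‖Dv‖(A)` of a function `v` in an arbitrary set `A`. -/
noncomputable def totalVar (μ : Measure X) (v : X → ℝ) (A : Set X) : ℝ≥0∞ :=
  ⨅ (W : Set X) (_ : IsOpen W ∧ A ⊆ W), variationOn μ v W

/-- The perimeter `P(E, A) = ‖Dχ_E‖(A)`. -/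
noncomputable def perimeter (μ : Measure X) (E A : Set X) : ℝ≥0∞ :=
  totalVar μ (Set.indicator E fun _ => (1 : ℝ)) A

/-- The measure `μ` is doubling. -/
def IsDoublingMeasure (μ : Measure X) : Prop :=
  ∃ C : ℝ≥0∞, 1 ≤ C ∧ ∀ (x : X) (r : ℝ), 0 < r → μ (ball x (2 * r)) ≤ C * μ (ball x r)

/-- The space supports a (1,1)-Poincaré inequality:
`⨍_{B(x,r)} |u - u_{B(x,r)}| dμ ≤ C r ⨍_{B(x,λr)} g dμ` for every ball, every
`u ∈ L¹_loc(X)` and every upper gradient `g` of `u` (stated here multiplied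
through by the measures of the two balls). -/
def SupportsPoincare (μ : Measure X) : Prop :=
  ∃ C lam : ℝ, 0 < C ∧ 1 ≤ lam ∧
    ∀ (x : X) (r : ℝ), 0 < r → ∀ (u : X → ℝ) (g : X → ℝ≥0∞),
      (∀ (y : X) (s : ℝ), IntegrableOn u (ball y s) μ) → IsUpperGradient g u →
        μ (ball x (lam * r)) *
            ∫⁻ y in ball x r, ENNReal.ofReal |u y - ⨍ z in ball x r, u z ∂μ| ∂μ ≤
          ENNReal.ofReal (C * r) * μ (ball x r) * ∫⁻ y in ball x (lam * r), g y ∂μ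

/-- `(X, d, μ)` is a PI space: complete, doubling, supporting a (1,1)-Poincaré
inequality. -/
def IsPISpace (μ : Measure X) : Prop :=
  CompleteSpace X ∧ IsDoublingMeasure μ ∧ SupportsPoincare μ

/-- A set `E` of finite perimeter is decomposable in a Borel set `D` if there is a
partition `{F, G}` of `E ∩ D` into sets of finite perimeter in `D`, both of positive
measure, with `P(E,D) = P(F,D) + P(G,D)`. -/
def IsDecomposableIn (μ : Measure X) (E D : Set X) : Prop :=
  ∃ F G : Set X, MeasurableSet F ∧ MeasurableSet G ∧ Disjoint F G ∧ F ∪ G = E ∩ D ∧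
    perimeter μ F D < ⊤ ∧ perimeter μ G D < ⊤ ∧ 0 < μ F ∧ 0 < μ G ∧
    perimeter μ E D = perimeter μ F D + perimeter μ G D

/-- `E` is indecomposable in `D`. -/
def IsIndecomposableIn (μ : Measure X) (E D : Set X) : Prop :=
  ¬ IsDecomposableIn μ E D

/-- `{F i}_{i ∈ I}` is a (finite or countable) partition of `E` into indecomposable
Borel sets of positive measure and finite perimeter whose perimeters sum to `P(E,X)`;
this is the defining property of the essential connected components `𝒞𝒞ᵉ(E)`. -/
def IsEssentialPartition (μ : Measure X) (E : Set X) (I : Set ℕ) (F : ℕ → Set X) : Prop :=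
  (∀ i ∈ I, MeasurableSet (F i)) ∧
  (∀ i ∈ I, ∀ j ∈ I, i ≠ j → Disjoint (F i) (F j)) ∧
  (⋃ i ∈ I, F i) = E ∧
  (∀ i ∈ I, 0 < μ (F i)) ∧
  (∀ i ∈ I, perimeter μ (F i) Set.univ < ⊤) ∧
  (∀ i ∈ I, IsIndecomposableIn μ (F i) Set.univ) ∧
  perimeter μ E Set.univ = ∑' i : I, perimeter μ (F i.1) Set.univ

/-- Given a decomposition `{G i}_{i ∈ I}` of `X ∖ E` into essential connected
components, the saturation of `E`: the union of `E` and its holes, i.e. the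
components of finite measure. -/
def saturationOf (μ : Measure X) (E : Set X) (I : Set ℕ) (G : ℕ → Set X) : Set X :=
  E ∪ ⋃ (i : ℕ) (_ : i ∈ I ∧ μ (G i) < ⊤), G i

/-- The measure-theoretic boundary `∂* E`: points where both `E` and its complement
have strictly positive upper density. -/
def mtBoundary (μ : Measure X) (E : Set X) : Set X :=
  {x : X |
    0 < Filter.limsup (fun r => μ (ball x r ∩ E) / μ (ball x r)) (nhdsWithin 0 (Set.Ioi 0)) ∧
    0 < Filter.limsup (fun r => μ (ball x r \ E) / μ (ball x r)) (nhdsWithin 0 (Set.Ioi 0))}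

/-- The restricted codimension-one Hausdorff content `ℋ_R`. -/
noncomputable def codimOneContent (μ : Measure X) (R : ℝ) (A : Set X) : ℝ≥0∞ :=
  ⨅ (s : Set (X × ℝ))
    (_ : s.Countable ∧ (∀ p ∈ s, 0 < p.2 ∧ p.2 ≤ R) ∧ A ⊆ ⋃ p ∈ s, ball p.1 p.2),
    ∑' p : s, μ (ball (p : X × ℝ).1 (p : X × ℝ).2) / ENNReal.ofReal (p : X × ℝ).2

/-- The codimension-one Hausdorff measure `ℋ(A) = lim_{R → 0} ℋ_R(A)`. -/
noncomputable def codimOneHausdorff (μ : Measure X) (A : Set X) : ℝ≥0∞ :=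
  ⨆ (R : ℝ) (_ : 0 < R), codimOneContent μ R A

/-!
The perimeter is strongly subadditive, `P(A ∪ B, D) + P(A ∩ B, D) ≤ P(A, D) + P(B, D)`, and the
theorem follows formally: add up this inequality for the pairs `(A, F)`, `(A, G)` and
`(A ∪ F, A ∪ G)`, the last of which has intersection `A` and union `E`, and cancel.

Strong subadditivity comes from an energy inequality for locally Lipschitz functions `u`, `v`: on
`{v < u}` the functions `max u v` and `min u v` are `u` and `v`, elsewhere they are `v` and `u`, so
gluing weak upper gradients of `u` and `v` accordingly yields weak upper gradients of the maximum
and the minimum with the same total integral. As a curve may cross the boundary of `{v < u}` in a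
complicated set, the gluing is done infinitesimally: along almost every curve `γ`, the upper
gradient inequality holds on all subcurves, which means `|(u ∘ γ)'| ≤ g ∘ γ` almost everywhere.
-/

theorem norm_le_norm_of_eventually_norm_sub_le {𝕜 E F : Type*} [NontriviallyNormedField 𝕜]
    [NormedAddCommGroup E] [NormedSpace 𝕜 E] [NormedAddCommGroup F] [NormedSpace 𝕜 F]
    {f : 𝕜 → E} {g : 𝕜 → F} {f' : E} {g' : F} {x : 𝕜} (hf : HasDerivAt f f' x)
    (hg : HasDerivAt g g' x) (h : ∀ᶠ y in 𝓝 x, ‖f y - f x‖ ≤ ‖g y - g x‖) : ‖f'‖ ≤ ‖g'‖ := by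
  refine le_of_tendsto_of_tendsto (hasDerivAt_iff_tendsto_slope.1 hf).norm
    (hasDerivAt_iff_tendsto_slope.1 hg).norm (eventually_nhdsWithin_of_eventually_nhds ?_)
  filter_upwards [h] with y hy
  rw [slope_def_module, slope_def_module, norm_smul, norm_smul]
  gcongr

theorem norm_sub_le_norm_integral_sub_integral {E : Type*} [SeminormedAddCommGroup E]
    {f : ℝ → E} {g : ℝ → ℝ≥0∞} {a b : ℝ}
    (hg : AEMeasurable g (volume.restrict (Icc a b))) (hfin : ∫⁻ t in Icc a b, g t ≠ ⊤)
    (hfg : ∀ s t, a ≤ s → s ≤ t → t ≤ b → ‖f s - f t‖ₑ ≤ ∫⁻ τ in Icc s t, g τ)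
    {s t : ℝ} (hs : s ∈ Icc a b) (ht : t ∈ Icc a b) :
    ‖f s - f t‖ ≤ ‖(∫ τ in a..s, (g τ).toReal) - ∫ τ in a..t, (g τ).toReal‖ := by
  wlog hst : s ≤ t generalizing s t
  · rw [norm_sub_rev (f s), norm_sub_rev (∫ τ in a..s, (g τ).toReal)]
    exact this ht hs (le_of_not_ge hst)
  have hint : ∀ x ∈ Icc a b, IntervalIntegrable (fun τ => (g τ).toReal) volume a x := fun x hx =>
    (intervalIntegrable_iff_integrableOn_Icc_of_le hx.1).2
      (IntegrableOn.mono_set (integrable_toReal_of_lintegral_ne_top hg hfin)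
        (Icc_subset_Icc_right hx.2))
  have hst_sub : Icc s t ⊆ Icc a b := Icc_subset_Icc hs.1 ht.2
  have hst_fin : ∫⁻ τ in Icc s t, g τ ≠ ⊤ := ne_top_of_le_ne_top hfin (lintegral_mono_set hst_sub)
  have hst_meas : AEMeasurable g (volume.restrict (Icc s t)) := hg.mono_set hst_sub
  have hle : ‖f s - f t‖ ≤ ∫ τ in Icc s t, (g τ).toReal := by
    rw [integral_toReal hst_meas (ae_lt_top' hst_meas hst_fin), ← toReal_enorm]
    exact ENNReal.toReal_mono hst_fin (hfg s t hs.1 hst ht.2)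
  rw [norm_sub_rev (∫ τ in a..s, (g τ).toReal),
    intervalIntegral.integral_interval_sub_left (hint t ht) (hint s hs),
    intervalIntegral.integral_of_le hst, ← integral_Icc_eq_integral_Ioc]
  exact hle.trans (Real.le_norm_self _)

theorem ae_enorm_deriv_le_of_enorm_sub_le_setLIntegral {E : Type*} [NormedAddCommGroup E]
    [NormedSpace ℝ E] {f : ℝ → E} {g : ℝ → ℝ≥0∞} {a b : ℝ} (hab : a ≤ b)
    (hg : AEMeasurable g (volume.restrict (Icc a b))) (hfin : ∫⁻ t in Icc a b, g t ≠ ⊤)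
    (hfg : ∀ s t, a ≤ s → s ≤ t → t ≤ b → ‖f s - f t‖ₑ ≤ ∫⁻ τ in Icc s t, g τ) :
    ∀ᵐ t ∂volume.restrict (Icc a b), ‖deriv f t‖ₑ ≤ g t := by
  have hint : IntervalIntegrable (fun t => (g t).toReal) volume a b :=
    (intervalIntegrable_iff_integrableOn_Icc_of_le hab).2
      (integrable_toReal_of_lintegral_ne_top hg hfin)
  rw [← restrict_Ioo_eq_restrict_Icc] at hg ⊢
  have hfin' : ∀ᵐ t ∂volume.restrict (Ioo a b), g t < ⊤ :=
    ae_lt_top' hg (by rwa [restrict_Ioo_eq_restrict_Icc])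
  filter_upwards [ae_restrict_of_ae hint.ae_hasDerivAt_integral, hfin',
    ae_restrict_mem measurableSet_Ioo] with t hderiv hgt ht
  by_cases hft : DifferentiableAt ℝ f t
  · have hderiv_t := hderiv (Icc_subset_uIcc (Ioo_subset_Icc_self ht)) a left_mem_uIcc
    rw [← ENNReal.ofReal_toReal hgt.ne, ← ofReal_norm]
    refine ENNReal.ofReal_le_ofReal ?_
    rw [← Real.norm_of_nonneg (ENNReal.toReal_nonneg (a := g t))]
    refine norm_le_norm_of_eventually_norm_sub_le hft.hasDerivAt hderiv_t ?_
    filter_upwards [Icc_mem_nhds ht.1 ht.2] with x hx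
    exact norm_sub_le_norm_integral_sub_integral (by rwa [← restrict_Ioo_eq_restrict_Icc]) hfin hfg
      hx (Ioo_subset_Icc_self ht)
  · simp [deriv_zero_of_not_differentiableAt hft]

theorem enorm_sub_le_setLIntegral_of_ae_enorm_deriv_le {f : ℝ → ℝ} {g : ℝ → ℝ≥0∞}
    {a b : ℝ} (hab : a ≤ b) (hf : AbsolutelyContinuousOnInterval f a b)
    (hfg : ∀ᵐ t ∂volume.restrict (Icc a b), ‖deriv f t‖ₑ ≤ g t) :
    ‖f a - f b‖ₑ ≤ ∫⁻ t in Icc a b, g t := by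
  calc ‖f a - f b‖ₑ = ‖∫ t in Icc a b, deriv f t‖ₑ := by
        rw [enorm_sub_rev, ← hf.integral_deriv_eq_sub, intervalIntegral.integral_of_le hab,
          integral_Icc_eq_integral_Ioc]
    _ ≤ ∫⁻ t in Icc a b, ‖deriv f t‖ₑ := enorm_integral_le_lintegral_enorm _
    _ ≤ ∫⁻ t in Icc a b, g t := lintegral_mono_ae hfg

theorem deriv_eq_deriv_of_eventuallyLE_of_eq {f g : ℝ → ℝ} {t : ℝ} (hf : DifferentiableAt ℝ f t)
    (hg : DifferentiableAt ℝ g t) (hle : f ≤ᶠ[𝓝 t] g) (heq : f t = g t) :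
    deriv f t = deriv g t := by
  have hmin : IsLocalMin (g - f) t := hle.mono fun x hx => by
    simpa only [Pi.sub_apply, heq, sub_self, sub_nonneg] using hx
  have hderiv := hmin.deriv_eq_zero
  rw [deriv_sub hg hf, sub_eq_zero] at hderiv
  exact hderiv.symm

theorem deriv_max_eq_ite {f g : ℝ → ℝ} {t : ℝ} (hf : DifferentiableAt ℝ f t)
    (hg : DifferentiableAt ℝ g t) (hmax : DifferentiableAt ℝ (fun s => max (f s) (g s)) t) :
    deriv (fun s => max (f s) (g s)) t = if g t < f t then deriv f t else deriv g t := by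
  split_ifs with h
  · exact (deriv_eq_deriv_of_eventuallyLE_of_eq hf hmax (.of_forall fun s => le_max_left _ _)
      (max_eq_left h.le).symm).symm
  · exact (deriv_eq_deriv_of_eventuallyLE_of_eq hg hmax (.of_forall fun s => le_max_right _ _)
      (max_eq_right (not_lt.1 h)).symm).symm

theorem deriv_min_eq_ite {f g : ℝ → ℝ} {t : ℝ} (hf : DifferentiableAt ℝ f t)
    (hg : DifferentiableAt ℝ g t) (hmin : DifferentiableAt ℝ (fun s => min (f s) (g s)) t) :
    deriv (fun s => min (f s) (g s)) t = if g t < f t then deriv g t else deriv f t := by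
  split_ifs with h
  · exact deriv_eq_deriv_of_eventuallyLE_of_eq hmin hg (.of_forall fun s => min_le_right _ _)
      (min_eq_right h.le)
  · exact deriv_eq_deriv_of_eventuallyLE_of_eq hmin hf (.of_forall fun s => min_le_left _ _)
      (min_eq_left (not_lt.1 h))

theorem lintegral_piecewise_add_lintegral_piecewise {α : Type*} [MeasurableSpace α] (μ : Measure α)
    {s : Set α} [DecidablePred (· ∈ s)] (hs : MeasurableSet s) {g h : α → ℝ≥0∞} (hg : Measurable g)
    (hh : Measurable h) :
    ∫⁻ x, s.piecewise g h x ∂μ + ∫⁻ x, s.piecewise h g x ∂μ = ∫⁻ x, g x ∂μ + ∫⁻ x, h x ∂μ := by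
  rw [← lintegral_add_left (hg.piecewise hs hh), ← lintegral_add_left hg]
  refine lintegral_congr fun x => ?_
  by_cases hx : x ∈ s <;> simp [hx, add_comm]

theorem liminf_add_liminf_le_liminf_add {ι : Type*} {l : Filter ι} (u v : ι → ℝ≥0∞) :
    liminf u l + liminf v l ≤ liminf (fun i => u i + v i) l := by
  rw [liminf_eq_iSup_iInf, liminf_eq_iSup_iInf]
  refine ENNReal.biSup_add_biSup_le' ⟨univ, univ_mem⟩ ⟨univ, univ_mem⟩ fun s hs t ht =>
    le_liminf_of_le (by isBoundedDefault) ?_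
  filter_upwards [hs, ht] with i his hit
  exact add_le_add (iInf₂_le i his) (iInf₂_le i hit)

theorem indicator_union_eq_max {α M : Type*} [Zero M] [LinearOrder M] {f : α → M} (hf : 0 ≤ f)
    (s t : Set α) : (s ∪ t).indicator f = fun x => max (s.indicator f x) (t.indicator f x) := by
  ext x
  have hfx : 0 ≤ f x := hf x
  by_cases hs : x ∈ s <;> by_cases ht : x ∈ t <;> simp [hs, ht, hfx]

theorem indicator_inter_eq_min {α M : Type*} [Zero M] [LinearOrder M] {f : α → M} (hf : 0 ≤ f)
    (s t : Set α) : (s ∩ t).indicator f = fun x => min (s.indicator f x) (t.indicator f x) := by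
  ext x
  have hfx : 0 ≤ f x := hf x
  by_cases hs : x ∈ s <;> by_cases ht : x ∈ t <;> simp [hs, ht, hfx]

section UpperGradients

variable {Y : Type*} [MetricSpace Y]

theorem LocLipschitzOn.mono {u : Y → ℝ} {W W' : Set Y} (hu : LocLipschitzOn u W) (h : W' ⊆ W) :
    LocLipschitzOn u W' :=
  LocallyLipschitzOn.mono (s := W') (t := W) hu h

theorem LocLipschitzOn.continuousOn {u : Y → ℝ} {W : Set Y} (hu : LocLipschitzOn u W) :
    ContinuousOn u W :=
  LocallyLipschitzOn.continuousOn (s := W) hu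

theorem LocLipschitzOn.max {u v : Y → ℝ} {W : Set Y} (hu : LocLipschitzOn u W)
    (hv : LocLipschitzOn v W) : LocLipschitzOn (fun x => max (u x) (v x)) W := fun x hx => by
  obtain ⟨K, t, ht, hK⟩ := hu x hx
  obtain ⟨K', t', ht', hK'⟩ := hv x hx
  exact ⟨_, t ∩ t', inter_mem ht ht', lipschitzWith_max.comp_lipschitzOnWith
    ((hK.mono inter_subset_left).prodMk (hK'.mono inter_subset_right))⟩

theorem LocLipschitzOn.min {u v : Y → ℝ} {W : Set Y} (hu : LocLipschitzOn u W)
    (hv : LocLipschitzOn v W) : LocLipschitzOn (fun x => min (u x) (v x)) W := fun x hx => by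
  obtain ⟨K, t, ht, hK⟩ := hu x hx
  obtain ⟨K', t', ht', hK'⟩ := hv x hx
  exact ⟨_, t ∩ t', inter_mem ht ht', lipschitzWith_min.comp_lipschitzOnWith
    ((hK.mono inter_subset_left).prodMk (hK'.mono inter_subset_right))⟩

theorem LocLipschitzOn.isOpen_inter_setOf_lt {u v : Y → ℝ} {W : Set Y} (hu : LocLipschitzOn u W)
    (hv : LocLipschitzOn v W) (hW : IsOpen W) : IsOpen (W ∩ {x | v x < u x}) := by
  simpa only [preimage, mem_Ioi, Pi.sub_apply, sub_pos] using
    (hu.continuousOn.sub hv.continuousOn).isOpen_inter_preimage hW (isOpen_Ioi (a := (0 : ℝ)))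

theorem LocLipschitzOn.absolutelyContinuousOnInterval_comp {u : Y → ℝ} {W : Set Y}
    (hu : LocLipschitzOn u W) {γ : Curve Y} (hγ : γ.IsIn W) :
    AbsolutelyContinuousOnInterval (fun t => u (γ.toFun t)) 0 γ.len := by
  have hcompact : IsCompact (γ.toFun '' Icc 0 γ.len) :=
    isCompact_Icc.image_of_continuousOn γ.lipschitzOn.continuousOn
  have hlip : LocallyLipschitzOn (γ.toFun '' Icc 0 γ.len) u := hu.mono (image_subset_iff.2 hγ)
  obtain ⟨K, hK⟩ := hlip.exists_lipschitzOnWith_of_compact hcompact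
  refine LipschitzOnWith.absolutelyContinuousOnInterval (K := K * 1) ?_
  rw [uIcc_of_le γ.len_nonneg]
  exact hK.comp γ.lipschitzOn (mapsTo_image _ _)

theorem LocLipschitzOn.ae_differentiableAt_comp {u : Y → ℝ} {W : Set Y}
    (hu : LocLipschitzOn u W) {γ : Curve Y} (hγ : γ.IsIn W) :
    ∀ᵐ t ∂volume.restrict (Icc 0 γ.len), DifferentiableAt ℝ (fun τ => u (γ.toFun τ)) t := by
  rw [ae_restrict_iff' measurableSet_Icc, ← uIcc_of_le γ.len_nonneg]
  exact (hu.absolutelyContinuousOnInterval_comp hγ).ae_differentiableAt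

/-- The restriction of a curve to the subinterval `[s, t]`, reparametrized on `[0, t - s]`. -/
def Curve.subcurve (γ : Curve Y) {s t : ℝ} (hs : 0 ≤ s) (hst : s ≤ t) (ht : t ≤ γ.len) :
    Curve Y where
  len := t - s
  len_nonneg := sub_nonneg.2 hst
  toFun τ := γ.toFun (s + τ)
  lipschitzOn := fun x hx y hy => by
    simpa using γ.lipschitzOn (x := s + x) (y := s + y)
      ⟨by linarith [hx.1], by linarith [hx.2]⟩ ⟨by linarith [hy.1], by linarith [hy.2]⟩

theorem Curve.IsIn.subcurve {γ : Curve Y} {W : Set Y} (hγ : γ.IsIn W) {s t : ℝ} (hs : 0 ≤ s)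
    (hst : s ≤ t) (ht : t ≤ γ.len) : (γ.subcurve hs hst ht).IsIn W := fun τ ⟨hτ₀, hτ⟩ => by
  have hτ' : τ ≤ t - s := hτ
  exact hγ _ ⟨by linarith, by linarith⟩

theorem curveLintegral_subcurve (g : Y → ℝ≥0∞) (γ : Curve Y) {s t : ℝ} (hs : 0 ≤ s)
    (hst : s ≤ t) (ht : t ≤ γ.len) :
    curveLintegral g (γ.subcurve hs hst ht) = ∫⁻ τ in Icc s t, g (γ.toFun τ) := by
  have hshift := (measurePreserving_add_left volume s).setLIntegral_comp_preimage_emb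
    (measurableEmbedding_addLeft s) (fun τ => g (γ.toFun τ)) (Icc s t)
  simpa only [curveLintegral, Curve.subcurve, preimage_const_add_Icc, sub_self] using hshift

theorem upperGradIneq_subcurve_iff {g : Y → ℝ≥0∞} {u : Y → ℝ} {γ : Curve Y} {s t : ℝ}
    (hs : 0 ≤ s) (hst : s ≤ t) (ht : t ≤ γ.len) :
    UpperGradIneq g u (γ.subcurve hs hst ht) ↔
      ‖u (γ.toFun s) - u (γ.toFun t)‖ₑ ≤ ∫⁻ τ in Icc s t, g (γ.toFun τ) := by
  rw [UpperGradIneq, curveLintegral_subcurve, ← Real.enorm_eq_ofReal_abs]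
  simp only [Curve.subcurve, add_zero, add_sub_cancel]

theorem UpperGradIneq.of_not_isNonconstant (g : Y → ℝ≥0∞) (u : Y → ℝ) {γ : Curve Y}
    (hγ : ¬ γ.IsNonconstant) : UpperGradIneq g u γ := by
  have hends : γ.toFun 0 = γ.toFun γ.len := by
    by_contra hne
    exact hγ ⟨0, left_mem_Icc.2 γ.len_nonneg, γ.len, right_mem_Icc.2 γ.len_nonneg, hne⟩
  simp [UpperGradIneq, hends]

/-- The infinitesimal form `|(u ∘ γ)'| ≤ g ∘ γ` a.e. of the upper gradient inequality along `γ`.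
Unlike `UpperGradIneq`, it can be checked separately on the pieces of a partition of the curve into
measurable sets. Parameters at which `u ∘ γ` is not differentiable impose no condition, as `deriv`
vanishes there. -/
def InfinitesimalUpperGradIneq (g : Y → ℝ≥0∞) (u : Y → ℝ) (γ : Curve Y) : Prop :=
  ∀ᵐ t ∂volume.restrict (Icc 0 γ.len), ‖deriv (fun τ => u (γ.toFun τ)) t‖ₑ ≤ g (γ.toFun t)

theorem InfinitesimalUpperGradIneq.upperGradIneq {g : Y → ℝ≥0∞} {u : Y → ℝ} {γ : Curve Y}
    (h : InfinitesimalUpperGradIneq g u γ)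
    (hu : AbsolutelyContinuousOnInterval (fun t => u (γ.toFun t)) 0 γ.len) :
    UpperGradIneq g u γ := by
  rw [UpperGradIneq, ← Real.enorm_eq_ofReal_abs]
  exact enorm_sub_le_setLIntegral_of_ae_enorm_deriv_le γ.len_nonneg hu h

open scoped Classical in
theorem InfinitesimalUpperGradIneq.max {u v : Y → ℝ} {g h : Y → ℝ≥0∞} {W : Set Y} {γ : Curve Y}
    (hg : InfinitesimalUpperGradIneq g u γ) (hh : InfinitesimalUpperGradIneq h v γ)
    (hγ : γ.IsIn W) (hu : LocLipschitzOn u W) (hv : LocLipschitzOn v W) :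
    InfinitesimalUpperGradIneq ((W ∩ {x | v x < u x}).piecewise g h)
      (fun x => max (u x) (v x)) γ := by
  filter_upwards [hg, hh, hu.ae_differentiableAt_comp hγ, hv.ae_differentiableAt_comp hγ,
    (hu.max hv).ae_differentiableAt_comp hγ, ae_restrict_mem measurableSet_Icc]
    with t hgt hht hut hvt hmax ht
  rw [deriv_max_eq_ite hut hvt hmax]
  by_cases hlt : v (γ.toFun t) < u (γ.toFun t)
  · simpa [Set.piecewise, hγ t ht, hlt] using hgt
  · simpa [Set.piecewise, hγ t ht, hlt] using hht

open scoped Classical in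
theorem InfinitesimalUpperGradIneq.min {u v : Y → ℝ} {g h : Y → ℝ≥0∞} {W : Set Y} {γ : Curve Y}
    (hg : InfinitesimalUpperGradIneq g u γ) (hh : InfinitesimalUpperGradIneq h v γ)
    (hγ : γ.IsIn W) (hu : LocLipschitzOn u W) (hv : LocLipschitzOn v W) :
    InfinitesimalUpperGradIneq ((W ∩ {x | v x < u x}).piecewise h g)
      (fun x => min (u x) (v x)) γ := by
  filter_upwards [hg, hh, hu.ae_differentiableAt_comp hγ, hv.ae_differentiableAt_comp hγ,
    (hu.min hv).ae_differentiableAt_comp hγ, ae_restrict_mem measurableSet_Icc]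
    with t hgt hht hut hvt hmin ht
  rw [deriv_min_eq_ite hut hvt hmin]
  by_cases hlt : v (γ.toFun t) < u (γ.toFun t)
  · simpa [Set.piecewise, hγ t ht, hlt] using hht
  · simpa [Set.piecewise, hγ t ht, hlt] using hgt

end UpperGradients

section CurveModulus

variable {Y : Type*} [MetricSpace Y] [MeasurableSpace Y] {μ : Measure Y}

theorem mod1_le_lintegral {Γ : Set (Curve Y)} {ρ : Y → ℝ≥0∞} (hρ : Measurable ρ)
    (hΓ : ∀ γ ∈ Γ, 1 ≤ curveLintegral ρ γ) : mod1 μ Γ ≤ ∫⁻ x, ρ x ∂μ :=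
  iInf₂_le ρ ⟨hρ, hΓ⟩

theorem mod1_le_mod1_of_forall_exists {Γ Γ' : Set (Curve Y)}
    (h : ∀ γ ∈ Γ, ∃ γ' ∈ Γ', ∀ ρ : Y → ℝ≥0∞, curveLintegral ρ γ' ≤ curveLintegral ρ γ) :
    mod1 μ Γ ≤ mod1 μ Γ' :=
  le_iInf₂ fun ρ hρ => mod1_le_lintegral hρ.1 fun γ hγ => by
    obtain ⟨γ', hγ', hle⟩ := h γ hγ
    exact (hρ.2 γ' hγ').trans (hle ρ)

theorem mod1_mono {Γ Γ' : Set (Curve Y)} (h : Γ ⊆ Γ') : mod1 μ Γ ≤ mod1 μ Γ' :=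
  mod1_le_mod1_of_forall_exists fun γ hγ => ⟨γ, h hγ, fun _ => le_rfl⟩

theorem mod1_empty : mod1 μ (∅ : Set (Curve Y)) = 0 :=
  le_antisymm ((mod1_le_lintegral measurable_zero fun _ => False.elim).trans_eq lintegral_zero)
    zero_le

theorem mod1_union_le (Γ Γ' : Set (Curve Y)) : mod1 μ (Γ ∪ Γ') ≤ mod1 μ Γ + mod1 μ Γ' := by
  simp only [mod1, ENNReal.iInf_add, ENNReal.add_iInf]
  refine le_iInf₂ fun ρ' hρ' => le_iInf₂ fun ρ hρ => ?_
  rw [← lintegral_add_left hρ.1]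
  refine mod1_le_lintegral (hρ.1.add hρ'.1) ?_
  rintro γ (hγ | hγ)
  · exact (hρ.2 γ hγ).trans (lintegral_mono fun t => le_self_add)
  · exact (hρ'.2 γ hγ).trans (lintegral_mono fun t => le_add_self)

/-- The filter of curve families whose complement has `1`-modulus zero, so that
`∀ᶠ γ in curveAE μ, p γ` says that `p` holds along `1`-almost every curve. -/
def curveAE (μ : Measure Y) : Filter (Curve Y) :=
  .comk (fun Γ => mod1 μ Γ = 0) mod1_empty
    (fun _ hΓ _ h => le_antisymm ((mod1_mono h).trans_eq hΓ) zero_le)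
    (fun Γ hΓ Γ' hΓ' => le_antisymm ((mod1_union_le Γ Γ').trans_eq (by rw [hΓ, hΓ', add_zero]))
      zero_le)

theorem eventually_curveAE_iff {p : Curve Y → Prop} :
    (∀ᶠ γ in curveAE μ, p γ) ↔ mod1 μ {γ | ¬ p γ} = 0 :=
  Iff.rfl

theorem eventually_curveAE_forall_subcurve {p : Curve Y → Prop} (h : ∀ᶠ γ in curveAE μ, p γ) :
    ∀ᶠ γ in curveAE μ, ∀ (s t : ℝ) (hs : 0 ≤ s) (hst : s ≤ t) (ht : t ≤ γ.len),
      p (γ.subcurve hs hst ht) := by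
  rw [eventually_curveAE_iff] at h ⊢
  refine le_antisymm ((mod1_le_mod1_of_forall_exists fun γ hγ => ?_).trans_eq h) zero_le
  simp only [mem_ofPred_eq, not_forall] at hγ
  obtain ⟨s, t, hs, hst, ht, hp⟩ := hγ
  refine ⟨_, hp, fun ρ => ?_⟩
  rw [curveLintegral_subcurve]
  exact lintegral_mono_set (Icc_subset_Icc hs ht)

theorem isWeakUpperGradientOn_iff {g : Y → ℝ≥0∞} {u : Y → ℝ} {W : Set Y} :
    IsWeakUpperGradientOn μ g u W ↔
      Measurable g ∧ ∀ᶠ γ in curveAE μ, γ.IsIn W → UpperGradIneq g u γ := by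
  rw [IsWeakUpperGradientOn, eventually_curveAE_iff]
  congr! 4
  ext γ
  have hconst := UpperGradIneq.of_not_isNonconstant g u (γ := γ)
  tauto

theorem isWeakUpperGradientOn_of_infinitesimalUpperGradIneq {g : Y → ℝ≥0∞} {u : Y → ℝ} {W : Set Y}
    (hu : LocLipschitzOn u W) (hg : Measurable g)
    (h : ∀ᶠ γ in curveAE μ, γ.IsIn W → InfinitesimalUpperGradIneq g u γ) :
    IsWeakUpperGradientOn μ g u W :=
  isWeakUpperGradientOn_iff.2 ⟨hg, h.mono fun _ hγ hW =>
    (hγ hW).upperGradIneq (hu.absolutelyContinuousOnInterval_comp hW)⟩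

theorem IsWeakUpperGradientOn.mono {g : Y → ℝ≥0∞} {u : Y → ℝ} {W W' : Set Y}
    (hg : IsWeakUpperGradientOn μ g u W) (h : W' ⊆ W) : IsWeakUpperGradientOn μ g u W' := by
  rw [isWeakUpperGradientOn_iff] at hg ⊢
  exact ⟨hg.1, hg.2.mono fun γ hγ hW' => hγ fun s hs => h (hW' s hs)⟩

end CurveModulus

section GradientEnergy

variable {Y : Type*} [MetricSpace Y] [MeasurableSpace Y] {μ : Measure Y}

theorem gradEnergy_le_lintegral {W : Set Y} {u : Y → ℝ} {g : Y → ℝ≥0∞}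
    (hg : IsWeakUpperGradientOn μ g u W) : gradEnergy μ u W ≤ ∫⁻ x in W, g x ∂μ :=
  iInf₂_le g hg

theorem gradEnergy_mono (u : Y → ℝ) {W W' : Set Y} (h : W' ⊆ W) :
    gradEnergy μ u W' ≤ gradEnergy μ u W :=
  le_iInf₂ fun _ hg => (gradEnergy_le_lintegral (hg.mono h)).trans (lintegral_mono_set h)

variable [BorelSpace Y]

theorem Curve.aemeasurable_comp {g : Y → ℝ≥0∞} (hg : Measurable g) (γ : Curve Y) :
    AEMeasurable (fun t => g (γ.toFun t)) (volume.restrict (Icc 0 γ.len)) :=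
  hg.comp_aemeasurable (γ.lipschitzOn.continuousOn.aemeasurable measurableSet_Icc)

theorem eventually_curveAE_curveLintegral_ne_top {W : Set Y} (hW : MeasurableSet W)
    {g : Y → ℝ≥0∞} (hg : Measurable g) (hfin : ∫⁻ x in W, g x ∂μ ≠ ⊤) :
    ∀ᶠ γ in curveAE μ, γ.IsIn W → curveLintegral g γ ≠ ⊤ := by
  have hmod_le : ∀ c : ℝ≥0∞, 0 < c →
      mod1 μ {γ | ¬ (γ.IsIn W → curveLintegral g γ ≠ ⊤)} ≤ c * ∫⁻ x in W, g x ∂μ := by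
    intro c hc
    have hmeas : Measurable (W.indicator g) := hg.indicator hW
    rw [← lintegral_indicator hW, ← lintegral_const_mul c hmeas]
    refine mod1_le_lintegral (hmeas.const_mul c) fun γ hγ => ?_
    obtain ⟨hγW, htop⟩ : γ.IsIn W ∧ curveLintegral g γ = ⊤ := by simpa using hγ
    calc (1 : ℝ≥0∞) ≤ c * curveLintegral g γ := by simp [htop, ENNReal.mul_top hc.ne']
      _ = c * curveLintegral (W.indicator g) γ := by
        congr 1
        exact setLIntegral_congr_fun measurableSet_Icc fun t ht =>
          (indicator_of_mem (hγW t ht) g).symm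
      _ = curveLintegral (fun x => c * W.indicator g x) γ :=
        (lintegral_const_mul'' c (γ.aemeasurable_comp hmeas)).symm
  have hlim : Tendsto (fun c : ℝ≥0∞ => c * ∫⁻ x in W, g x ∂μ) (𝓝[>] 0) (𝓝 0) := by
    have hid : Tendsto (fun c : ℝ≥0∞ => c) (𝓝[>] 0) (𝓝 0) := tendsto_id.mono_left nhdsWithin_le_nhds
    simpa using ENNReal.Tendsto.mul_const hid (Or.inr hfin)
  exact le_antisymm (ge_of_tendsto hlim (eventually_mem_nhdsWithin.mono hmod_le)) zero_le

theorem IsWeakUpperGradientOn.eventually_infinitesimalUpperGradIneq {W : Set Y}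
    (hW : MeasurableSet W) {g : Y → ℝ≥0∞} {u : Y → ℝ} (hg : IsWeakUpperGradientOn μ g u W)
    (hfin : ∫⁻ x in W, g x ∂μ ≠ ⊤) :
    ∀ᶠ γ in curveAE μ, γ.IsIn W → InfinitesimalUpperGradIneq g u γ := by
  obtain ⟨hmeas, hineq⟩ := isWeakUpperGradientOn_iff.1 hg
  filter_upwards [eventually_curveAE_curveLintegral_ne_top hW hmeas hfin,
    eventually_curveAE_forall_subcurve hineq] with γ hγfin hsub hγ
  exact ae_enorm_deriv_le_of_enorm_sub_le_setLIntegral γ.len_nonneg (γ.aemeasurable_comp hmeas)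
    (hγfin hγ) fun s t hs hst ht =>
      (upperGradIneq_subcurve_iff hs hst ht).1 (hsub s t hs hst ht (hγ.subcurve hs hst ht))

open scoped Classical in
theorem IsWeakUpperGradientOn.max {W : Set Y} (hW : IsOpen W) {u v : Y → ℝ} {g h : Y → ℝ≥0∞}
    (hu : LocLipschitzOn u W) (hv : LocLipschitzOn v W) (hg : IsWeakUpperGradientOn μ g u W)
    (hh : IsWeakUpperGradientOn μ h v W) (hgfin : ∫⁻ x in W, g x ∂μ ≠ ⊤)
    (hhfin : ∫⁻ x in W, h x ∂μ ≠ ⊤) :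
    IsWeakUpperGradientOn μ ((W ∩ {x | v x < u x}).piecewise g h)
      (fun x => max (u x) (v x)) W := by
  refine isWeakUpperGradientOn_of_infinitesimalUpperGradIneq (hu.max hv)
    (hg.1.piecewise (hu.isOpen_inter_setOf_lt hv hW).measurableSet hh.1) ?_
  filter_upwards [hg.eventually_infinitesimalUpperGradIneq hW.measurableSet hgfin,
    hh.eventually_infinitesimalUpperGradIneq hW.measurableSet hhfin] with γ hgγ hhγ hγ
  exact (hgγ hγ).max (hhγ hγ) hγ hu hv

open scoped Classical in
theorem IsWeakUpperGradientOn.min {W : Set Y} (hW : IsOpen W) {u v : Y → ℝ} {g h : Y → ℝ≥0∞}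
    (hu : LocLipschitzOn u W) (hv : LocLipschitzOn v W) (hg : IsWeakUpperGradientOn μ g u W)
    (hh : IsWeakUpperGradientOn μ h v W) (hgfin : ∫⁻ x in W, g x ∂μ ≠ ⊤)
    (hhfin : ∫⁻ x in W, h x ∂μ ≠ ⊤) :
    IsWeakUpperGradientOn μ ((W ∩ {x | v x < u x}).piecewise h g)
      (fun x => min (u x) (v x)) W := by
  refine isWeakUpperGradientOn_of_infinitesimalUpperGradIneq (hu.min hv)
    (hh.1.piecewise (hu.isOpen_inter_setOf_lt hv hW).measurableSet hg.1) ?_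
  filter_upwards [hg.eventually_infinitesimalUpperGradIneq hW.measurableSet hgfin,
    hh.eventually_infinitesimalUpperGradIneq hW.measurableSet hhfin] with γ hgγ hhγ hγ
  exact (hgγ hγ).min (hhγ hγ) hγ hu hv

theorem gradEnergy_max_add_gradEnergy_min_le {W : Set Y} (hW : IsOpen W)
    {u v : Y → ℝ} (hu : LocLipschitzOn u W) (hv : LocLipschitzOn v W) :
    gradEnergy μ (fun x => max (u x) (v x)) W + gradEnergy μ (fun x => min (u x) (v x)) W ≤
      gradEnergy μ u W + gradEnergy μ v W := by
  classical
  conv_rhs => simp only [gradEnergy, ENNReal.iInf_add, ENNReal.add_iInf]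
  refine le_iInf₂ fun h hh => le_iInf₂ fun g hg => ?_
  rcases eq_or_ne (∫⁻ x in W, g x ∂μ) ⊤ with hgtop | hgfin
  · simp [hgtop]
  rcases eq_or_ne (∫⁻ x in W, h x ∂μ) ⊤ with hhtop | hhfin
  · simp [hhtop]
  exact (add_le_add (gradEnergy_le_lintegral (hg.max hW hu hv hh hgfin hhfin))
    (gradEnergy_le_lintegral (hg.min hW hu hv hh hgfin hhfin))).trans_eq
    (lintegral_piecewise_add_lintegral_piecewise _
      (hu.isOpen_inter_setOf_lt hv hW).measurableSet hg.1 hh.1)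

end GradientEnergy

section TotalVariation

variable {Y : Type*} [MetricSpace Y] [MeasurableSpace Y] {μ : Measure Y}

theorem TendstoL1loc.mono {W W' : Set Y} {u : ℕ → Y → ℝ} {v : Y → ℝ}
    (hu : TendstoL1loc μ W u v) (h : W' ⊆ W) : TendstoL1loc μ W' u v :=
  fun V hV hc hVW => hu V hV hc (hVW.trans h)

theorem TendstoL1loc.comp_tendsto {W : Set Y} {u : ℕ → Y → ℝ} {v : Y → ℝ}
    (hu : TendstoL1loc μ W u v) {φ : ℕ → ℕ} (hφ : Tendsto φ atTop atTop) :
    TendstoL1loc μ W (fun i => u (φ i)) v :=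
  fun V hV hc hVW => (hu V hV hc hVW).comp hφ

theorem variationOn_le_liminf {W : Set Y} {u : ℕ → Y → ℝ} {v : Y → ℝ}
    (hu : ∀ i, LocLipschitzOn (u i) W) (huv : TendstoL1loc μ W u v) :
    variationOn μ v W ≤ liminf (fun i => gradEnergy μ (u i) W) atTop :=
  iInf₂_le u ⟨hu, huv⟩

theorem variationOn_mono (v : Y → ℝ) {W W' : Set Y} (h : W' ⊆ W) :
    variationOn μ v W' ≤ variationOn μ v W :=
  le_iInf₂ fun u hu =>
    (variationOn_le_liminf (fun i => (hu.1 i).mono h) (hu.2.mono h)).trans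
      (liminf_le_liminf (.of_forall fun i => gradEnergy_mono (u i) h))

theorem exists_tendstoL1loc_gradEnergy_lt {v : Y → ℝ} {W : Set Y} {c : ℝ≥0∞}
    (h : variationOn μ v W < c) :
    ∃ u : ℕ → Y → ℝ, (∀ i, LocLipschitzOn (u i) W) ∧ TendstoL1loc μ W u v ∧
      ∀ i, gradEnergy μ (u i) W < c := by
  simp only [variationOn, iInf_lt_iff] at h
  obtain ⟨u, ⟨hu, huv⟩, hlt⟩ := h
  obtain ⟨φ, hφ, hlt⟩ := extraction_of_frequently_atTop
    (frequently_lt_of_liminf_lt (by isBoundedDefault) hlt)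
  exact ⟨fun i => u (φ i), fun i => hu _, huv.comp_tendsto hφ.tendsto_atTop, hlt⟩

theorem totalVar_le_variationOn (v : Y → ℝ) {A W : Set Y} (hW : IsOpen W) (hAW : A ⊆ W) :
    totalVar μ v A ≤ variationOn μ v W :=
  iInf₂_le W ⟨hW, hAW⟩

theorem totalVar_mono (v : Y → ℝ) {A B : Set Y} (h : A ⊆ B) : totalVar μ v A ≤ totalVar μ v B :=
  le_iInf₂ fun _ hW => totalVar_le_variationOn v hW.1 (h.trans hW.2)

variable [BorelSpace Y]

theorem TendstoL1loc.of_abs_sub_le_add {W : Set Y} {u v w : ℕ → Y → ℝ} {a b c : Y → ℝ}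
    (hua : TendstoL1loc μ W u a) (hvb : TendstoL1loc μ W v b)
    (hu : ∀ i, ContinuousOn (u i) W) (ha : AEMeasurable a μ)
    (hwc : ∀ i x, |w i x - c x| ≤ |u i x - a x| + |v i x - b x|) : TendstoL1loc μ W w c := by
  intro V hV hcompact hVW
  have hlim := (hua V hV hcompact hVW).add (hvb V hV hcompact hVW)
  rw [add_zero] at hlim
  refine tendsto_of_tendsto_of_tendsto_of_le_of_le tendsto_const_nhds hlim (fun _ => zero_le)
    fun i => ?_
  have hmeas : AEMeasurable (fun x => ENNReal.ofReal |u i x - a x|) (μ.restrict V) :=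
    ((((hu i).mono (subset_closure.trans hVW)).aemeasurable hV.measurableSet).sub
      ha.restrict).abs.ennreal_ofReal
  calc ∫⁻ x in V, ENNReal.ofReal |w i x - c x| ∂μ
      ≤ ∫⁻ x in V, ENNReal.ofReal |u i x - a x| + ENNReal.ofReal |v i x - b x| ∂μ := by
        refine lintegral_mono fun x => ?_
        rw [← ENNReal.ofReal_add (abs_nonneg _) (abs_nonneg _)]
        exact ENNReal.ofReal_le_ofReal (hwc i x)
    _ = _ := lintegral_add_left' hmeas _

theorem TendstoL1loc.max {W : Set Y} {u v : ℕ → Y → ℝ} {a b : Y → ℝ}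
    (hua : TendstoL1loc μ W u a) (hvb : TendstoL1loc μ W v b)
    (hu : ∀ i, ContinuousOn (u i) W) (ha : AEMeasurable a μ) :
    TendstoL1loc μ W (fun i x => max (u i x) (v i x)) (fun x => max (a x) (b x)) :=
  hua.of_abs_sub_le_add hvb hu ha fun _ _ => (abs_max_sub_max_le_max _ _ _ _).trans
    (max_le_add_of_nonneg (abs_nonneg _) (abs_nonneg _))

theorem TendstoL1loc.min {W : Set Y} {u v : ℕ → Y → ℝ} {a b : Y → ℝ}
    (hua : TendstoL1loc μ W u a) (hvb : TendstoL1loc μ W v b)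
    (hu : ∀ i, ContinuousOn (u i) W) (ha : AEMeasurable a μ) :
    TendstoL1loc μ W (fun i x => min (u i x) (v i x)) (fun x => min (a x) (b x)) :=
  hua.of_abs_sub_le_add hvb hu ha fun _ _ => (abs_min_sub_min_le_max _ _ _ _).trans
    (max_le_add_of_nonneg (abs_nonneg _) (abs_nonneg _))

theorem variationOn_max_add_variationOn_min_le {W : Set Y} (hW : IsOpen W) {a : Y → ℝ}
    (ha : AEMeasurable a μ) (b : Y → ℝ) :
    variationOn μ (fun x => max (a x) (b x)) W + variationOn μ (fun x => min (a x) (b x)) W ≤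
      variationOn μ a W + variationOn μ b W := by
  refine le_of_forall_gt fun c hc => ?_
  obtain ⟨α, hα, β, hβ, hαβ⟩ := ENNReal.exists_add_lt_of_add_lt hc
  obtain ⟨u, hu, hua, hu_lt⟩ := exists_tendstoL1loc_gradEnergy_lt hα
  obtain ⟨v, hv, hvb, hv_lt⟩ := exists_tendstoL1loc_gradEnergy_lt hβ
  have hcont : ∀ i, ContinuousOn (u i) W := fun i => (hu i).continuousOn
  set M : ℕ → ℝ≥0∞ := fun i => gradEnergy μ (fun x => max (u i x) (v i x)) W
  set m : ℕ → ℝ≥0∞ := fun i => gradEnergy μ (fun x => min (u i x) (v i x)) W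
  calc variationOn μ (fun x => max (a x) (b x)) W + variationOn μ (fun x => min (a x) (b x)) W
      ≤ liminf M atTop + liminf m atTop := add_le_add
        (variationOn_le_liminf (fun i => (hu i).max (hv i)) (hua.max hvb hcont ha))
        (variationOn_le_liminf (fun i => (hu i).min (hv i)) (hua.min hvb hcont ha))
    _ ≤ liminf (fun i => M i + m i) atTop := liminf_add_liminf_le_liminf_add M m
    _ ≤ liminf (fun _ : ℕ => α + β) atTop := liminf_le_liminf <| .of_forall fun i =>
        (gradEnergy_max_add_gradEnergy_min_le hW (hu i) (hv i)).trans
          (add_le_add (hu_lt i).le (hv_lt i).le)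
    _ = α + β := liminf_const _
    _ < c := hαβ

theorem totalVar_max_add_totalVar_min_le {a : Y → ℝ} (ha : AEMeasurable a μ) (b : Y → ℝ)
    (D : Set Y) :
    totalVar μ (fun x => max (a x) (b x)) D + totalVar μ (fun x => min (a x) (b x)) D ≤
      totalVar μ a D + totalVar μ b D := by
  conv_rhs => simp only [totalVar, ENNReal.iInf_add, ENNReal.add_iInf]
  refine le_iInf₂ fun W' ⟨hW', hDW'⟩ => le_iInf₂ fun W ⟨hW, hDW⟩ => ?_
  have hopen : IsOpen (W ∩ W') := hW.inter hW'
  have hD : D ⊆ W ∩ W' := subset_inter hDW hDW'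
  calc totalVar μ (fun x => max (a x) (b x)) D + totalVar μ (fun x => min (a x) (b x)) D
      ≤ variationOn μ (fun x => max (a x) (b x)) (W ∩ W') +
          variationOn μ (fun x => min (a x) (b x)) (W ∩ W') :=
        add_le_add (totalVar_le_variationOn _ hopen hD) (totalVar_le_variationOn _ hopen hD)
    _ ≤ variationOn μ a (W ∩ W') + variationOn μ b (W ∩ W') :=
        variationOn_max_add_variationOn_min_le hopen ha b
    _ ≤ variationOn μ a W + variationOn μ b W' :=
        add_le_add (variationOn_mono a inter_subset_left) (variationOn_mono b inter_subset_right)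

end TotalVariation

section Perimeter

variable {Y : Type*} [MetricSpace Y] [MeasurableSpace Y] {μ : Measure Y}

theorem perimeter_mono (E : Set Y) {D D' : Set Y} (h : D ⊆ D') :
    perimeter μ E D ≤ perimeter μ E D' :=
  totalVar_mono _ h

variable [BorelSpace Y]

theorem perimeter_union_add_perimeter_inter_le {A : Set Y} (hA : NullMeasurableSet A μ)
    (B D : Set Y) :
    perimeter μ (A ∪ B) D + perimeter μ (A ∩ B) D ≤ perimeter μ A D + perimeter μ B D := by
  have hone : (0 : Y → ℝ) ≤ fun _ => 1 := fun _ => zero_le_one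
  simp only [perimeter, indicator_union_eq_max hone, indicator_inter_eq_min hone]
  exact totalVar_max_add_totalVar_min_le (aemeasurable_const.indicator₀ hA) _ D

theorem perimeter_le_perimeter_inter_add_perimeter_inter {A F G : Set Y}
    (hA : NullMeasurableSet A μ) (hF : NullMeasurableSet F μ) (hAFG : A ⊆ F ∪ G) (D : Set Y) :
    perimeter μ A D ≤ perimeter μ (A ∩ F) D + perimeter μ (A ∩ G) D := by
  have hunion : A ∩ F ∪ A ∩ G = A := by rw [← inter_union_distrib_left, inter_eq_left.2 hAFG]
  calc perimeter μ A D
      ≤ perimeter μ (A ∩ F ∪ A ∩ G) D + perimeter μ (A ∩ F ∩ (A ∩ G)) D := by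
        rw [hunion]; exact le_self_add
    _ ≤ perimeter μ (A ∩ F) D + perimeter μ (A ∩ G) D :=
        perimeter_union_add_perimeter_inter_le (hA.inter hF) _ D

theorem perimeter_inter_add_perimeter_inter_le {A F G D : Set Y} (hA : NullMeasurableSet A μ)
    (hF : NullMeasurableSet F μ) (hdisj : Disjoint F G) (hAFG : A ⊆ F ∪ G)
    (hfin : perimeter μ (F ∪ G) D ≠ ⊤)
    (hadd : perimeter μ (F ∪ G) D = perimeter μ F D + perimeter μ G D) :
    perimeter μ (A ∩ F) D + perimeter μ (A ∩ G) D ≤ perimeter μ A D := by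
  rcases eq_or_ne (perimeter μ A D) ⊤ with htop | hAfin
  · exact htop ▸ le_top
  have hF_pair := perimeter_union_add_perimeter_inter_le hA F D
  have hG_pair := perimeter_union_add_perimeter_inter_le hA G D
  have hunion_pair : perimeter μ (F ∪ G) D + perimeter μ A D ≤
      perimeter μ (A ∪ F) D + perimeter μ (A ∪ G) D := by
    have h := perimeter_union_add_perimeter_inter_le (hA.union hF) (A ∪ G) D
    rwa [← union_inter_distrib_left, hdisj.inter_eq, union_empty, ← union_union_distrib_left,
      union_eq_right.2 hAFG] at h
  refine (ENNReal.add_le_add_iff_right (ENNReal.add_ne_top.2 ⟨hfin, hAfin⟩)).1 ?_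
  calc perimeter μ (A ∩ F) D + perimeter μ (A ∩ G) D + (perimeter μ (F ∪ G) D + perimeter μ A D)
      ≤ perimeter μ (A ∩ F) D + perimeter μ (A ∩ G) D +
          (perimeter μ (A ∪ F) D + perimeter μ (A ∪ G) D) := by gcongr
    _ = (perimeter μ (A ∪ F) D + perimeter μ (A ∩ F) D) +
          (perimeter μ (A ∪ G) D + perimeter μ (A ∩ G) D) := by ring
    _ ≤ (perimeter μ A D + perimeter μ F D) + (perimeter μ A D + perimeter μ G D) := by gcongr
    _ = perimeter μ A D + (perimeter μ (F ∪ G) D + perimeter μ A D) := by rw [hadd]; ring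

theorem perimeter_partition_restrict_general {E F G A D : Set Y} (hF : NullMeasurableSet F μ)
    (hdisj : Disjoint F G) (hunion : F ∪ G = E) (hEfin : perimeter μ E D ≠ ⊤)
    (hadd : perimeter μ E D = perimeter μ F D + perimeter μ G D) (hA : NullMeasurableSet A μ)
    (hAE : A ⊆ E) :
    perimeter μ A D = perimeter μ (A ∩ F) D + perimeter μ (A ∩ G) D := by
  subst hunion
  exact le_antisymm (perimeter_le_perimeter_inter_add_perimeter_inter hA hF hAE D)
    (perimeter_inter_add_perimeter_inter_le hA hF hdisj hAE hEfin hadd)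

end Perimeter

/-- **Lemma 4.2 (Lemma 2.8 of BPR).** If `{F, G}` is a Borel partition of a set of
finite perimeter `E` with `P(E,D) = P(F,D) + P(G,D)` for a Borel set `D`, then
`P(A,D) = P(A ∩ F, D) + P(A ∩ G, D)` for every set `A ⊆ E` of finite perimeter. -/
theorem perimeter_partition_restrict
    [ProperSpace X] (μ : Measure X)
    (hball : ∀ (x : X) (r : ℝ), 0 < r → 0 < μ (ball x r) ∧ μ (ball x r) < ⊤)
    (E : Set X) (hE : MeasurableSet E) (hEfin : perimeter μ E Set.univ < ⊤)
    (D : Set X) (hD : MeasurableSet D)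
    (F G : Set X) (hFmeas : MeasurableSet F) (hGmeas : MeasurableSet G)
    (hdisj : Disjoint F G) (hunion : F ∪ G = E)
    (hadd : perimeter μ E D = perimeter μ F D + perimeter μ G D) :
    ∀ A : Set X, A ⊆ E → MeasurableSet A → perimeter μ A Set.univ < ⊤ →
      perimeter μ A D = perimeter μ (A ∩ F) D + perimeter μ (A ∩ G) D := by
  intro A hAE hA _
  exact perimeter_partition_restrict_general hFmeas.nullMeasurableSet hdisj hunion
    ((perimeter_mono E (subset_univ D)).trans_lt hEfin).ne hadd hA.nullMeasurableSet hAE
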